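/- arXiv:2008.01804 — 2 statements merged into one kernel-verified Lean document; each statement's English description precedes it below -/
import Mathlib

section
/- Let γ > 0 and let c : ℝ² → ℝ be continuous with c(x) ≥ γ for all x. Let ε₁, ε₂ > 0, let u : ℝ² → ℝ be four times continuously differentiable with compact support, and define f := ε₁²Δ²u − ε₂²Δu + c·u, where Δ is the Laplacian and Δ² the biharmonic operator. Then ‖u‖²_{L²(ℝ²)} + ε₂² ‖∇u‖²_{L²(ℝ²)} + ε₁² ‖Δu‖²_{L²(ℝ²)} ≤ (min(γ,1))⁻² ‖f‖²_{L²(ℝ²)}. -/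
open MeasureTheory Real

/-- The Laplacian of a function on `ℝ²`, as the sum of the second partial derivatives. -/
noncomputable def lap (u : EuclideanSpace ℝ (Fin 2) → ℝ) (x : EuclideanSpace ℝ (Fin 2)) : ℝ :=
  ∑ i : Fin 2,
    fderiv ℝ (fun y => fderiv ℝ u y (EuclideanSpace.single i 1)) x (EuclideanSpace.single i 1)

/-
Testing the equation against `u` and integrating by parts twice gives
`∫ u f = ε₁² ∫ (Δu)² + ε₂² ∫ ‖∇u‖² + ∫ c u²`. Since `c ≥ γ`, the right-hand side is at least
`m N`, where `m = min γ 1` and `N` is the squared energy norm, while by Young's inequality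
`2 m ∫ u f ≤ m² ∫ u² + ∫ f² ≤ m² N + ∫ f²`. Together, `m² N ≤ ∫ f²`.
-/

open scoped Gradient Laplacian

lemma integrable_mul_of_hasCompactSupport {X : Type*} [TopologicalSpace X] [MeasurableSpace X]
    [OpensMeasurableSpace X] {μ : Measure X} [IsFiniteMeasureOnCompacts μ] {u v : X → ℝ}
    (hu : Continuous u) (hv : Continuous v) (hs : HasCompactSupport u) :
    Integrable (fun x => u x * v x) μ :=
  (hu.mul hv).integrable_of_hasCompactSupport hs.mul_right

lemma two_mul_integral_mul_le {X : Type*} [MeasurableSpace X] {μ : Measure X} {u f : X → ℝ}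
    (hu : MemLp u 2 μ) (hf : MemLp f 2 μ) (m : ℝ) :
    2 * m * ∫ x, u x * f x ∂μ ≤ m ^ 2 * ∫ x, u x ^ 2 ∂μ + ∫ x, f x ^ 2 ∂μ := by
  have hmu : Integrable (fun x => m ^ 2 * u x ^ 2) μ := hu.integrable_sq.const_mul _
  rw [← integral_const_mul, ← integral_const_mul, ← integral_add hmu hf.integrable_sq]
  refine integral_mono ((hu.integrable_mul hf).const_mul _) (hmu.add hf.integrable_sq) fun x => ?_
  linarith [two_mul_le_add_sq (m * u x) (f x)]

lemma integral_mul_fderiv_eq_neg_of_hasCompactSupport {E : Type*} [NormedAddCommGroup E]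
    [NormedSpace ℝ E] [FiniteDimensional ℝ E] [MeasurableSpace E] [BorelSpace E] {μ : Measure E}
    [μ.IsAddHaarMeasure] {u v : E → ℝ} (hu : ContDiff ℝ 1 u) (hv : ContDiff ℝ 1 v)
    (hs : HasCompactSupport u) (e : E) :
    ∫ x, u x * fderiv ℝ v x e ∂μ = -∫ x, fderiv ℝ u x e * v x ∂μ :=
  have hu' : Continuous fun x => fderiv ℝ u x e :=
    (hu.continuous_fderiv one_ne_zero).clm_apply continuous_const
  have hv' : Continuous fun x => fderiv ℝ v x e :=
    (hv.continuous_fderiv one_ne_zero).clm_apply continuous_const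
  integral_mul_fderiv_eq_neg_fderiv_mul_of_integrable
    (integrable_mul_of_hasCompactSupport hu' hv.continuous (hs.fderiv_apply (𝕜 := ℝ) e))
    (integrable_mul_of_hasCompactSupport hu.continuous hv' hs)
    (integrable_mul_of_hasCompactSupport hu.continuous hv.continuous hs)
    (fun x _ => hu.differentiable one_ne_zero x) (fun x _ => hv.differentiable one_ne_zero x)

section Laplacian

variable {E F ι : Type*} [NormedAddCommGroup E] [InnerProductSpace ℝ E] [FiniteDimensional ℝ E]
  [NormedAddCommGroup F] [NormedSpace ℝ F] [Fintype ι]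

lemma laplacian_eq_sum_fderiv_fderiv {u : E → F} {x : E} (hu : ContDiffAt ℝ 2 u x)
    (b : OrthonormalBasis ι ℝ E) :
    Δ u x = ∑ i, fderiv ℝ (fun y => fderiv ℝ u y (b i)) x (b i) := by
  have hu' : DifferentiableAt ℝ (fderiv ℝ u) x :=
    (hu.fderiv_right (m := 1) (by norm_num)).differentiableAt one_ne_zero
  simp [InnerProductSpace.laplacian_eq_iteratedFDeriv_orthonormalBasis u b,
    iteratedFDeriv_two_apply, fderiv_clm_apply hu' (differentiableAt_const _)]

lemma contDiff_laplacian {m n : WithTop ℕ∞} {u : E → F} (hu : ContDiff ℝ n u) (h : m + 2 ≤ n) :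
    ContDiff ℝ m (Δ u) := by
  rw [InnerProductSpace.laplacian_eq_iteratedFDeriv_stdOrthonormalBasis]
  exact ContDiff.sum fun i _ =>
    (ContinuousMultilinearMap.apply ℝ (fun _ : Fin 2 => E) F _).contDiff.comp
      (hu.iteratedFDeriv_right h)

lemma hasCompactSupport_laplacian {u : E → F} (hu : HasCompactSupport u) :
    HasCompactSupport (Δ u) := by
  rw [InnerProductSpace.laplacian_eq_iteratedFDeriv_stdOrthonormalBasis]
  exact (hu.iteratedFDeriv (𝕜 := ℝ) 2).comp_left
    (g := fun T : E [×2]→L[ℝ] F =>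
      ∑ i, T ![stdOrthonormalBasis ℝ E i, stdOrthonormalBasis ℝ E i])
    (Finset.sum_eq_zero fun _ _ => rfl)

lemma inner_gradient_eq_sum_fderiv_mul_fderiv (u v : E → ℝ) (x : E)
    (b : OrthonormalBasis ι ℝ E) :
    inner ℝ (∇ u x) (∇ v x) = ∑ i, fderiv ℝ u x (b i) * fderiv ℝ v x (b i) := by
  rw [← b.sum_inner_mul_inner]
  simp only [inner_gradient_left, inner_gradient_right, conj_trivial]

end Laplacian

section Green

variable {E : Type*} [NormedAddCommGroup E] [InnerProductSpace ℝ E] [FiniteDimensional ℝ E]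
  [MeasurableSpace E] [BorelSpace E] {μ : Measure E} {u v : E → ℝ}

lemma integrable_mul_laplacian [IsFiniteMeasureOnCompacts μ] (hu : Continuous u)
    (hv : ContDiff ℝ 2 v) (hs : HasCompactSupport u) :
    Integrable (fun x => u x * Δ v x) μ :=
  integrable_mul_of_hasCompactSupport hu
    (contDiff_laplacian (m := 0) hv (zero_add _).le).continuous hs

variable [μ.IsAddHaarMeasure]

lemma integral_mul_laplacian_eq_neg_integral_inner_gradient (hu : ContDiff ℝ 1 u)
    (hv : ContDiff ℝ 2 v) (hs : HasCompactSupport u) :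
    ∫ x, u x * Δ v x ∂μ = -∫ x, inner ℝ (∇ u x) (∇ v x) ∂μ := by
  let b := stdOrthonormalBasis ℝ E
  have hu' (i) : Continuous fun x => fderiv ℝ u x (b i) :=
    (hu.continuous_fderiv one_ne_zero).clm_apply continuous_const
  have hv' (i) : ContDiff ℝ 1 fun x => fderiv ℝ v x (b i) :=
    (hv.fderiv_right (by norm_num)).clm_apply contDiff_const
  have hv'' (i) : Continuous fun x => fderiv ℝ (fun y => fderiv ℝ v y (b i)) x (b i) :=
    ((hv' i).continuous_fderiv one_ne_zero).clm_apply continuous_const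
  simp only [laplacian_eq_sum_fderiv_fderiv hv.contDiffAt b,
    inner_gradient_eq_sum_fderiv_mul_fderiv u v _ b, Finset.mul_sum]
  rw [integral_finsetSum _ fun i _ =>
      integrable_mul_of_hasCompactSupport hu.continuous (hv'' i) hs,
    integral_finsetSum _ fun i _ => integrable_mul_of_hasCompactSupport (hu' i)
      (hv' i).continuous (hs.fderiv_apply (𝕜 := ℝ) (b i)),
    ← Finset.sum_neg_distrib]
  exact Finset.sum_congr rfl fun i _ =>
    integral_mul_fderiv_eq_neg_of_hasCompactSupport hu (hv' i) hs (b i)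

lemma integral_mul_laplacian_self (hu : ContDiff ℝ 2 u) (hs : HasCompactSupport u) :
    ∫ x, u x * Δ u x ∂μ = -∫ x, ‖∇ u x‖ ^ 2 ∂μ := by
  simp only [integral_mul_laplacian_eq_neg_integral_inner_gradient (hu.of_le one_le_two) hu hs,
    real_inner_self_eq_norm_sq]

lemma integral_mul_laplacian_comm (hu : ContDiff ℝ 2 u) (hv : ContDiff ℝ 2 v)
    (hus : HasCompactSupport u) (hvs : HasCompactSupport v) :
    ∫ x, u x * Δ v x ∂μ = ∫ x, Δ u x * v x ∂μ := by
  simp only [mul_comm (Δ u _),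
    integral_mul_laplacian_eq_neg_integral_inner_gradient (hu.of_le one_le_two) hv hus,
    integral_mul_laplacian_eq_neg_integral_inner_gradient (hv.of_le one_le_two) hu hvs,
    real_inner_comm]

end Green

section Energy

variable {E : Type*} [NormedAddCommGroup E] [InnerProductSpace ℝ E] [FiniteDimensional ℝ E]

/-- The two-parameter singularly perturbed operator `u ↦ ε₁² Δ²u - ε₂² Δu + c u`, the left-hand
side of the equation. Derivatives are classical, so it is meant for `u` of class `C⁴`. -/
noncomputable def perturbedBiharmonic (ε₁ ε₂ : ℝ) (c u : E → ℝ) (x : E) : ℝ :=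
  ε₁ ^ 2 * Δ (Δ u) x - ε₂ ^ 2 * Δ u x + c x * u x

/-- The square of the energy norm `|||(u, ε₁ Δu)|||`, the quantity bounded by the a priori estimate.
Derivatives are classical and a divergent integral counts as `0`, so it is meant for `u` of class
`C²` with `u`, `∇ u` and `Δ u` square integrable. -/
noncomputable def energyNormSq [MeasurableSpace E] (μ : Measure E) (ε₁ ε₂ : ℝ) (u : E → ℝ) : ℝ :=
  ∫ x, u x ^ 2 ∂μ + ε₂ ^ 2 * ∫ x, ‖∇ u x‖ ^ 2 ∂μ + ε₁ ^ 2 * ∫ x, Δ u x ^ 2 ∂μ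

lemma integral_sq_le_energyNormSq [MeasurableSpace E] (μ : Measure E) (ε₁ ε₂ : ℝ) (u : E → ℝ) :
    ∫ x, u x ^ 2 ∂μ ≤ energyNormSq μ ε₁ ε₂ u := by
  rw [energyNormSq, add_assoc]
  exact le_add_of_nonneg_right (by positivity)

variable {ε₁ ε₂ : ℝ} {c u : E → ℝ}

lemma continuous_perturbedBiharmonic (hc : Continuous c) (hu : ContDiff ℝ 4 u) :
    Continuous (perturbedBiharmonic ε₁ ε₂ c u) := by
  have hΔu : ContDiff ℝ 2 (Δ u) := contDiff_laplacian hu (by norm_num)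
  have hΔΔu : ContDiff ℝ 0 (Δ (Δ u)) := contDiff_laplacian hΔu (by norm_num)
  exact ((hΔΔu.continuous.const_mul _).sub (hΔu.continuous.const_mul _)).add
    (hc.mul hu.continuous)

lemma hasCompactSupport_perturbedBiharmonic (hs : HasCompactSupport u) :
    HasCompactSupport (perturbedBiharmonic ε₁ ε₂ c u) :=
  have hΔs := hasCompactSupport_laplacian hs
  (((hasCompactSupport_laplacian hΔs).mul_left (f := fun _ => ε₁ ^ 2)).sub
    (hΔs.mul_left (f := fun _ => ε₂ ^ 2))).add (hs.mul_left (f := c))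

lemma mul_perturbedBiharmonic (x : E) :
    u x * perturbedBiharmonic ε₁ ε₂ c u x =
      c x * u x ^ 2 - ε₂ ^ 2 * (u x * Δ u x) + ε₁ ^ 2 * (u x * Δ (Δ u) x) := by
  rw [perturbedBiharmonic]
  ring

variable [MeasurableSpace E] [BorelSpace E] {μ : Measure E}

lemma integrable_mul_sq_of_integrable_mul_perturbedBiharmonic [IsFiniteMeasureOnCompacts μ]
    (hu : ContDiff ℝ 4 u) (hs : HasCompactSupport u)
    (hLu : Integrable (fun x => u x * perturbedBiharmonic ε₁ ε₂ c u x) μ) :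
    Integrable (fun x => c x * u x ^ 2) μ := by
  have hi₂ : Integrable (fun x => u x * Δ u x) μ :=
    integrable_mul_laplacian hu.continuous (hu.of_le (by norm_num)) hs
  have hi₄ : Integrable (fun x => u x * Δ (Δ u) x) μ :=
    integrable_mul_laplacian hu.continuous (contDiff_laplacian hu (by norm_num)) hs
  refine ((hLu.add (hi₂.const_mul (ε₂ ^ 2))).sub (hi₄.const_mul (ε₁ ^ 2))).congr
    (.of_forall fun x => ?_)
  simp only [Pi.add_apply, Pi.sub_apply, mul_perturbedBiharmonic]
  ring

variable [μ.IsAddHaarMeasure]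

lemma integral_mul_perturbedBiharmonic (hu : ContDiff ℝ 4 u) (hs : HasCompactSupport u)
    (hcu : Integrable (fun x => c x * u x ^ 2) μ) :
    ∫ x, u x * perturbedBiharmonic ε₁ ε₂ c u x ∂μ =
      ∫ x, c x * u x ^ 2 ∂μ + ε₂ ^ 2 * ∫ x, ‖∇ u x‖ ^ 2 ∂μ + ε₁ ^ 2 * ∫ x, Δ u x ^ 2 ∂μ := by
  have hu₂ : ContDiff ℝ 2 u := hu.of_le (by norm_num)
  have hΔu : ContDiff ℝ 2 (Δ u) := contDiff_laplacian hu (by norm_num)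
  have hi₂ : Integrable (fun x => ε₂ ^ 2 * (u x * Δ u x)) μ :=
    (integrable_mul_laplacian hu.continuous hu₂ hs).const_mul _
  have hi₄ : Integrable (fun x => ε₁ ^ 2 * (u x * Δ (Δ u) x)) μ :=
    (integrable_mul_laplacian hu.continuous hΔu hs).const_mul _
  have h_biharmonic : ∫ x, u x * Δ (Δ u) x ∂μ = ∫ x, Δ u x ^ 2 ∂μ := by
    simp only [sq, integral_mul_laplacian_comm hu₂ hΔu hs (hasCompactSupport_laplacian hs)]
  calc ∫ x, u x * perturbedBiharmonic ε₁ ε₂ c u x ∂μ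
      = ∫ x, c x * u x ^ 2 ∂μ - ε₂ ^ 2 * ∫ x, u x * Δ u x ∂μ
          + ε₁ ^ 2 * ∫ x, u x * Δ (Δ u) x ∂μ := by
        simp only [mul_perturbedBiharmonic]
        rw [integral_add (by exact hcu.sub hi₂) hi₄, integral_sub hcu hi₂, integral_const_mul,
          integral_const_mul]
    _ = ∫ x, c x * u x ^ 2 ∂μ + ε₂ ^ 2 * ∫ x, ‖∇ u x‖ ^ 2 ∂μ + ε₁ ^ 2 * ∫ x, Δ u x ^ 2 ∂μ := by
        rw [integral_mul_laplacian_self hu₂ hs, h_biharmonic, mul_neg, sub_neg_eq_add]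

lemma min_mul_energyNormSq_le_integral_mul_perturbedBiharmonic {γ : ℝ} (hc : ∀ᵐ x ∂μ, γ ≤ c x)
    (hu : ContDiff ℝ 4 u) (hs : HasCompactSupport u) (hcu : Integrable (fun x => c x * u x ^ 2) μ) :
    min γ 1 * energyNormSq μ ε₁ ε₂ u ≤ ∫ x, u x * perturbedBiharmonic ε₁ ε₂ c u x ∂μ := by
  have hu_sq : Integrable (fun x => u x ^ 2) μ :=
    (hu.continuous.memLp_of_hasCompactSupport hs).integrable_sq
  have h_reaction : min γ 1 * ∫ x, u x ^ 2 ∂μ ≤ ∫ x, c x * u x ^ 2 ∂μ := by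
    rw [← integral_const_mul]
    refine integral_mono_ae (hu_sq.const_mul _) hcu ?_
    filter_upwards [hc] with x hx
    exact mul_le_mul_of_nonneg_right ((min_le_left γ 1).trans hx) (sq_nonneg _)
  have h_gradient : min γ 1 * (ε₂ ^ 2 * ∫ x, ‖∇ u x‖ ^ 2 ∂μ) ≤ ε₂ ^ 2 * ∫ x, ‖∇ u x‖ ^ 2 ∂μ :=
    mul_le_of_le_one_left (by positivity) (min_le_right γ 1)
  have h_laplacian : min γ 1 * (ε₁ ^ 2 * ∫ x, Δ u x ^ 2 ∂μ) ≤ ε₁ ^ 2 * ∫ x, Δ u x ^ 2 ∂μ :=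
    mul_le_of_le_one_left (by positivity) (min_le_right γ 1)
  rw [integral_mul_perturbedBiharmonic hu hs hcu, energyNormSq, mul_add, mul_add]
  gcongr

theorem energy_norm_stability_general {γ : ℝ} (hγ : 0 < γ) (hc : ∀ᵐ x ∂μ, γ ≤ c x)
    (hu : ContDiff ℝ 4 u) (hs : HasCompactSupport u) {f : E → ℝ} (hf : MemLp f 2 μ)
    (hfu : f =ᵐ[μ] perturbedBiharmonic ε₁ ε₂ c u) :
    energyNormSq μ ε₁ ε₂ u ≤ ((min γ 1)⁻¹) ^ 2 * ∫ x, f x ^ 2 ∂μ := by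
  have hm : 0 < min γ 1 := lt_min hγ one_pos
  have hu_memLp : MemLp u 2 μ := hu.continuous.memLp_of_hasCompactSupport hs
  have huf : (fun x => u x * f x) =ᵐ[μ] fun x => u x * perturbedBiharmonic ε₁ ε₂ c u x :=
    hfu.mono fun x hx => congrArg (u x * ·) hx
  have hcu : Integrable (fun x => c x * u x ^ 2) μ :=
    integrable_mul_sq_of_integrable_mul_perturbedBiharmonic hu hs
      ((hu_memLp.integrable_mul hf).congr huf)
  have h_coercive : min γ 1 * energyNormSq μ ε₁ ε₂ u ≤ ∫ x, u x * f x ∂μ :=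
    (min_mul_energyNormSq_le_integral_mul_perturbedBiharmonic hc hu hs hcu).trans_eq
      (integral_congr_ae huf).symm
  have h_young := two_mul_integral_mul_le hu_memLp hf (min γ 1)
  have h_sq : min γ 1 ^ 2 * energyNormSq μ ε₁ ε₂ u ≤ ∫ x, f x ^ 2 ∂μ := by
    linarith [mul_le_mul_of_nonneg_left h_coercive hm.le,
      mul_le_mul_of_nonneg_left (integral_sq_le_energyNormSq μ ε₁ ε₂ u)
        (sq_nonneg (min γ 1))]
  rwa [inv_pow, le_inv_mul_iff₀ (by positivity)]

end Energy

lemma lap_eq_laplacian {u : EuclideanSpace ℝ (Fin 2) → ℝ} (hu : ContDiff ℝ 2 u) :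
    lap u = Δ u := by
  funext x
  simp only [laplacian_eq_sum_fderiv_fderiv hu.contDiffAt (EuclideanSpace.basisFun (Fin 2) ℝ),
    EuclideanSpace.basisFun_apply, lap]

/-- A priori energy-norm stability estimate for classical, compactly supported solutions of
`ε₁²Δ²u − ε₂²Δu + cu = f`:
`‖u‖² + ε₂²‖∇u‖² + ε₁²‖Δu‖² ≤ (min γ 1)⁻² ‖f‖²`. -/
theorem energy_norm_stability
    (γ : ℝ) (hγ : 0 < γ)
    (c : EuclideanSpace ℝ (Fin 2) → ℝ) (hc_cont : Continuous c)
    (hc_ge : ∀ x, γ ≤ c x)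
    (ε₁ ε₂ : ℝ) (hε₁ : 0 < ε₁) (hε₂ : 0 < ε₂)
    (u : EuclideanSpace ℝ (Fin 2) → ℝ)
    (hu_smooth : ContDiff ℝ 4 u) (hu_supp : HasCompactSupport u)
    (f : EuclideanSpace ℝ (Fin 2) → ℝ)
    (hf : ∀ x, f x = ε₁ ^ 2 * lap (lap u) x - ε₂ ^ 2 * lap u x + c x * u x) :
    (∫ x, u x ^ 2) + ε₂ ^ 2 * (∫ x, ‖gradient u x‖ ^ 2) + ε₁ ^ 2 * (∫ x, lap u x ^ 2)
      ≤ ((min γ 1)⁻¹) ^ 2 * ∫ x, f x ^ 2 := by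
  have hlap : lap u = Δ u := lap_eq_laplacian (hu_smooth.of_le (by norm_num))
  have hlap_lap : lap (lap u) = Δ (Δ u) := by
    rw [hlap, lap_eq_laplacian (contDiff_laplacian hu_smooth (by norm_num))]
  obtain rfl : f = perturbedBiharmonic ε₁ ε₂ c u :=
    funext fun x => by rw [hf, hlap_lap, hlap, perturbedBiharmonic]
  rw [hlap]
  exact energy_norm_stability_general hγ (.of_forall hc_ge) hu_smooth hu_supp
    ((continuous_perturbedBiharmonic hc_cont hu_smooth).memLp_of_hasCompactSupport
      (hasCompactSupport_perturbedBiharmonic hu_supp)) .rfl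
end

section
/- Let Ω ⊂ ℝ² be a bounded open set and M > 0 a constant such that for every t > 0 the Lebesgue measure of {x ∈ Ω : dist(x, ∂Ω) ≤ t} is at most M·t. Let 0 < ε₁ ≤ ε₂² ≤ 1, let C > 0, and let E : Ω → ℝ be twice continuously differentiable with, for all x ∈ Ω and d(x) := dist(x, ∂Ω): |E(x)| ≤ C e^{−d(x)/ε₂}, |∇E(x)| ≤ C ε₂⁻¹ e^{−d(x)/ε₂}, and |ΔE(x)| ≤ C ε₂⁻² e^{−d(x)/ε₂}. Then the squared balanced norm of (E, ε₁ΔE) is uniformly bounded: (ε₂/ε₁) ‖ε₁ΔE‖²_{L²(Ω)} + ε₂ ‖∇E‖²_{L²(Ω)} + ‖E‖²_{L²(Ω)} ≤ 2 C² M, uniformly in ε₁ and ε₂. -/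
open MeasureTheory Real Metric

/-!
Write `d` for the distance to the boundary. By the layer-cake formula, the strip bound
`|{d < t}| ≤ M t` gives `∫ e^{-d/ε} ≤ ∫₀¹ M ε (-log s) ds = M ε`, so every function bounded by
`K e^{-d/ε₂}` has squared `L²` norm at most `K² M ε₂ / 2`. This factor `ε₂` compensates the
weights and the powers of `ε₂⁻¹` in the derivative bounds: the three terms of the balanced norm are
at most `ε₁ / ε₂²`, `1` and `ε₂` times `C² M / 2`.
-/

open scoped NNReal

theorem setLIntegral_Ioi_ofReal_neg_log :
    ∫⁻ t in Set.Ioi (0 : ℝ), ENNReal.ofReal (-log t) = 1 := by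
  have integral_unit : ∫ t in Set.Ioc (0 : ℝ) 1, -log t = 1 := by
    rw [← intervalIntegral.integral_of_le zero_le_one, intervalIntegral.integral_neg, integral_log]
    norm_num
  have integrable_unit : IntegrableOn (fun t : ℝ ↦ -log t) (Set.Ioc 0 1) :=
    (intervalIntegrable_iff_integrableOn_Ioc_of_le zero_le_one).1
      intervalIntegral.intervalIntegrable_log'.neg
  have nonneg_unit : 0 ≤ᵐ[volume.restrict (Set.Ioc (0 : ℝ) 1)] fun t ↦ -log t :=
    ae_restrict_of_forall_mem measurableSet_Ioc fun t ht ↦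
      neg_nonneg.2 (log_nonpos ht.1.le ht.2)
  have lintegral_tail : ∫⁻ t in Set.Ioi (1 : ℝ), ENNReal.ofReal (-log t) = 0 :=
    setLIntegral_eq_zero measurableSet_Ioi fun t ht ↦
      ENNReal.ofReal_of_nonpos (neg_nonpos.2 (log_nonneg (le_of_lt ht)))
  rw [← Set.Ioc_union_Ioi_eq_Ioi zero_le_one,
    lintegral_union measurableSet_Ioi Set.Ioc_disjoint_Ioi_same, lintegral_tail, add_zero,
    ← ofReal_integral_eq_lintegral_ofReal integrable_unit nonneg_unit, integral_unit,
    ENNReal.ofReal_one]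

/-- The strips `{d < t}` have measure at most `M t`; here `d` plays the role of the distance to the
boundary, and this is the only way in which the geometry of the domain enters. All real `t` are
allowed, so that the condition includes `0 ≤ d` almost everywhere. -/
def HasLinearStrips {α : Type*} [MeasurableSpace α] (μ : Measure α) (d : α → ℝ) (M : ℝ≥0) : Prop :=
  ∀ t : ℝ, μ {x | d x < t} ≤ M * ENNReal.ofReal t

/-- The squared balanced norm `|||(u, w)|||_B²` with weights `ε₁, ε₂`, with `g` in the place of
`∇u`; no relation between `u`, `g` and `w` enters, so they are independent arguments. -/
noncomputable def balancedNormSq {α F G H : Type*} [MeasurableSpace α] [Norm F] [Norm G] [Norm H]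
    (μ : Measure α) (ε₁ ε₂ : ℝ) (u : α → F) (g : α → G) (w : α → H) : ℝ :=
  ε₂ / ε₁ * (∫ x, ‖w x‖ ^ 2 ∂μ) + ε₂ * (∫ x, ‖g x‖ ^ 2 ∂μ) + ∫ x, ‖u x‖ ^ 2 ∂μ

section LinearStrips

variable {α : Type*} [MeasurableSpace α] {μ : Measure α} {d : α → ℝ} {M : ℝ≥0} {ε : ℝ}

theorem hasLinearStrips_restrict {s : Set α} (hs : MeasurableSet s) (hd : ∀ x ∈ s, 0 ≤ d x)
    (hstrip : ∀ t : ℝ, 0 < t → μ {x ∈ s | d x ≤ t} ≤ ENNReal.ofReal (M * t)) :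
    HasLinearStrips (μ.restrict s) d M := by
  intro t
  rw [Measure.restrict_apply' hs]
  rcases le_or_gt t 0 with ht | ht
  · have strip_empty : {x | d x < t} ∩ s = ∅ :=
      Set.eq_empty_of_forall_notMem fun x hx ↦ (ht.trans (hd x hx.2)).not_gt hx.1
    simp only [strip_empty, measure_empty, zero_le]
  · calc μ ({x | d x < t} ∩ s)
      _ ≤ μ {x ∈ s | d x ≤ t} := measure_mono fun x hx ↦ ⟨hx.2, le_of_lt hx.1⟩
      _ ≤ ENNReal.ofReal (M * t) := hstrip t ht
      _ = M * ENNReal.ofReal t := by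
        rw [ENNReal.ofReal_mul M.coe_nonneg, ENNReal.ofReal_coe_nnreal]

namespace HasLinearStrips

theorem lintegral_exp_neg_div_le (h : HasLinearStrips μ d M) (hd : AEMeasurable d μ)
    (hε : 0 < ε) : ∫⁻ x, ENNReal.ofReal (exp (-d x / ε)) ∂μ ≤ M * ENNReal.ofReal ε := by
  have superlevel_eq (t : ℝ) (ht : 0 < t) :
      {x | t < exp (-d x / ε)} = {x | d x < ε * -log t} := by
    ext x
    rw [Set.mem_ofPred_eq, Set.mem_ofPred_eq, ← log_lt_iff_lt_exp ht, lt_div_iff₀ hε, lt_neg,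
      mul_neg, mul_comm]
  calc ∫⁻ x, ENNReal.ofReal (exp (-d x / ε)) ∂μ
      = ∫⁻ t in Set.Ioi 0, μ {x | t < exp (-d x / ε)} :=
        lintegral_eq_lintegral_meas_lt μ (.of_forall fun x ↦ (exp_pos _).le)
          (measurable_exp.comp_aemeasurable (hd.neg.div_const ε))
    _ ≤ ∫⁻ t in Set.Ioi 0, M * ENNReal.ofReal ε * ENNReal.ofReal (-log t) :=
        setLIntegral_mono' measurableSet_Ioi fun t ht ↦ by
          rw [superlevel_eq t ht, mul_assoc, ← ENNReal.ofReal_mul hε.le]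
          exact h _
    _ = M * ENNReal.ofReal ε := by
        rw [lintegral_const_mul _ (by fun_prop),
          setLIntegral_Ioi_ofReal_neg_log, mul_one]

theorem integrable_exp_neg_div (h : HasLinearStrips μ d M) (hd : AEMeasurable d μ)
    (hε : 0 < ε) : Integrable (fun x ↦ exp (-d x / ε)) μ := by
  refine ⟨(measurable_exp.comp_aemeasurable (hd.neg.div_const ε)).aestronglyMeasurable, ?_⟩
  rw [hasFiniteIntegral_iff_ofReal (.of_forall fun x ↦ (exp_pos _).le)]
  exact (h.lintegral_exp_neg_div_le hd hε).trans_lt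
    (ENNReal.mul_lt_top ENNReal.coe_lt_top ENNReal.ofReal_lt_top)

theorem integral_exp_neg_div_le (h : HasLinearStrips μ d M) (hd : AEMeasurable d μ)
    (hε : 0 < ε) : ∫ x, exp (-d x / ε) ∂μ ≤ M * ε := by
  rw [integral_eq_lintegral_of_nonneg_ae (.of_forall fun x ↦ (exp_pos _).le)
    (h.integrable_exp_neg_div hd hε).aestronglyMeasurable]
  refine ENNReal.toReal_le_of_le_ofReal (by positivity) ?_
  rw [ENNReal.ofReal_mul M.coe_nonneg, ENNReal.ofReal_coe_nnreal]
  exact h.lintegral_exp_neg_div_le hd hε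

theorem integral_norm_pow_le {F : Type*} [SeminormedAddGroup F] {f : α → F} {K : ℝ} {p : ℕ}
    (h : HasLinearStrips μ d M) (hd : AEMeasurable d μ) (hε : 0 < ε) (hK : 0 ≤ K) (hp : p ≠ 0)
    (hf : ∀ᵐ x ∂μ, ‖f x‖ ≤ K * exp (-d x / ε)) :
    ∫ x, ‖f x‖ ^ p ∂μ ≤ K ^ p * (M * (ε / p)) := by
  have hεp : 0 < ε / p := by positivity
  calc ∫ x, ‖f x‖ ^ p ∂μ
      ≤ ∫ x, K ^ p * exp (-d x / (ε / p)) ∂μ := by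
        refine integral_mono_of_nonneg (.of_forall fun x ↦ by positivity)
          ((h.integrable_exp_neg_div hd hεp).const_mul _) ?_
        filter_upwards [hf] with x hx
        calc ‖f x‖ ^ p ≤ (K * exp (-d x / ε)) ^ p := pow_le_pow_left₀ (norm_nonneg _) hx p
          _ = K ^ p * exp (-d x / (ε / p)) := by
            rw [mul_pow, ← exp_nat_mul, div_div_eq_mul_div, mul_comm (p : ℝ), div_mul_eq_mul_div]
    _ = K ^ p * ∫ x, exp (-d x / (ε / p)) ∂μ := integral_const_mul _ _
    _ ≤ K ^ p * (M * (ε / p)) := by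
        gcongr
        exact h.integral_exp_neg_div_le hd hεp

theorem balancedNormSq_le {F G H : Type*} [SeminormedAddGroup F] [SeminormedAddGroup G]
    [SeminormedAddGroup H] {u : α → F} {g : α → G} {w : α → H} {ε₁ ε₂ C : ℝ}
    (h : HasLinearStrips μ d M) (hd : AEMeasurable d μ) (hε₁ : 0 < ε₁) (hε₂ : 0 < ε₂) (hC : 0 ≤ C)
    (hu : ∀ᵐ x ∂μ, ‖u x‖ ≤ C * exp (-d x / ε₂))
    (hg : ∀ᵐ x ∂μ, ‖g x‖ ≤ C * ε₂⁻¹ * exp (-d x / ε₂))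
    (hw : ∀ᵐ x ∂μ, ‖w x‖ ≤ ε₁ * (C * ε₂⁻¹ ^ 2) * exp (-d x / ε₂)) :
    balancedNormSq μ ε₁ ε₂ u g w ≤ (ε₁ / ε₂ ^ 2 + 1 + ε₂) * (C ^ 2 * M / 2) := by
  have hu_sq := h.integral_norm_pow_le hd hε₂ hC two_ne_zero hu
  have hg_sq := h.integral_norm_pow_le hd hε₂ (by positivity) two_ne_zero hg
  have hw_sq := h.integral_norm_pow_le hd hε₂ (by positivity) two_ne_zero hw
  calc balancedNormSq μ ε₁ ε₂ u g w
      ≤ ε₂ / ε₁ * ((ε₁ * (C * ε₂⁻¹ ^ 2)) ^ 2 * (M * (ε₂ / (2 : ℕ))))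
        + ε₂ * ((C * ε₂⁻¹) ^ 2 * (M * (ε₂ / (2 : ℕ)))) + C ^ 2 * (M * (ε₂ / (2 : ℕ))) := by
        unfold balancedNormSq
        gcongr
    _ = (ε₁ / ε₂ ^ 2 + 1 + ε₂) * (C ^ 2 * M / 2) := by
        push_cast
        field_simp

end HasLinearStrips

end LinearStrips

theorem balanced_norm_slow_layer_general
    (Ω : Set (EuclideanSpace ℝ (Fin 2))) (hΩ_open : IsOpen Ω) (M : ℝ) (hM : 0 < M)
    (hstrip : ∀ t : ℝ, 0 < t →
      volume {x ∈ Ω | infDist x (frontier Ω) ≤ t} ≤ ENNReal.ofReal (M * t))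
    (ε₁ ε₂ : ℝ) (hε₁ : 0 < ε₁) (hε₁₂ : ε₁ ≤ ε₂ ^ 2) (hε₂1 : ε₂ ^ 2 ≤ 1) (C : ℝ) (hC : 0 < C)
    (E : EuclideanSpace ℝ (Fin 2) → ℝ) (hE_smooth : ContDiffOn ℝ 2 E Ω)
    (hE0 : ∀ x ∈ Ω, |E x| ≤ C * exp (-(infDist x (frontier Ω)) / ε₂))
    (hE1 : ∀ x ∈ Ω, ‖gradient E x‖ ≤ C * ε₂⁻¹ * exp (-(infDist x (frontier Ω)) / ε₂))
    (hE2 : ∀ x ∈ Ω, |lap E x| ≤ C * ε₂⁻¹ ^ 2 * exp (-(infDist x (frontier Ω)) / ε₂)) :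
    (ε₂ / ε₁) * (∫ x in Ω, (ε₁ * lap E x) ^ 2) + ε₂ * (∫ x in Ω, ‖gradient E x‖ ^ 2)
      + (∫ x in Ω, E x ^ 2)
      ≤ 3 / 2 * C ^ 2 * M := by
  rcases Ω.eq_empty_or_nonempty with rfl | ⟨x₀, hx₀⟩
  · simp only [Measure.restrict_empty, integral_zero_measure, mul_zero, add_zero]
    positivity
  lift M to ℝ≥0 using hM.le
  -- The sign of `ε₂` is read off the gradient bound, whose right-hand side must be nonnegative.
  have hε₂ : 0 < ε₂ := by
    have hε₂_nonneg : 0 ≤ ε₂ := inv_nonneg.1 <| nonneg_of_mul_nonneg_right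
      (nonneg_of_mul_nonneg_left ((norm_nonneg _).trans (hE1 x₀ hx₀)) (exp_pos _)) hC
    exact hε₂_nonneg.lt_of_ne' (sq_pos_iff.1 (hε₁.trans_le hε₁₂))
  have hε_ratio : ε₁ / ε₂ ^ 2 ≤ 1 := (div_le_one (by positivity)).2 hε₁₂
  have hε₂_le : ε₂ ≤ 1 := (sq_le_one_iff₀ hε₂.le).1 hε₂1
  have hw (x) (hx : x ∈ Ω) : ‖ε₁ * lap E x‖ ≤
      ε₁ * (C * ε₂⁻¹ ^ 2) * exp (-(infDist x (frontier Ω)) / ε₂) := by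
    rw [norm_mul, norm_of_nonneg hε₁.le, mul_assoc]
    exact mul_le_mul_of_nonneg_left (hE2 x hx) hε₁.le
  have hΩ := hΩ_open.measurableSet
  have h_norm := (hasLinearStrips_restrict hΩ (fun _ _ ↦ infDist_nonneg) hstrip).balancedNormSq_le
    (u := E) (continuous_infDist_pt _).aemeasurable hε₁ hε₂ hC.le
    (ae_restrict_of_forall_mem hΩ hE0) (ae_restrict_of_forall_mem hΩ hE1)
    (ae_restrict_of_forall_mem hΩ hw)
  simp only [balancedNormSq, norm_eq_abs, sq_abs] at h_norm
  calc _ ≤ (ε₁ / ε₂ ^ 2 + 1 + ε₂) * (C ^ 2 * M / 2) := h_norm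
    _ ≤ (1 + 1 + 1) * (C ^ 2 * M / 2) := by gcongr
    _ = 3 / 2 * C ^ 2 * M := by ring

/-- Balanced norm of the slow boundary layer component `E₂ ~ e^{−dist(x,∂Ω)/ε₂}`:
`|||(E, ε₁ΔE)|||_B² ≤ 2 C² M`, uniformly in `ε₁, ε₂`. -/
theorem balanced_norm_slow_layer
    (Ω : Set (EuclideanSpace ℝ (Fin 2)))
    (hΩ_open : IsOpen Ω) (hΩ_bdd : Bornology.IsBounded Ω)
    (M : ℝ) (hM : 0 < M)
    (hstrip : ∀ t : ℝ, 0 < t →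
      volume {x ∈ Ω | infDist x (frontier Ω) ≤ t} ≤ ENNReal.ofReal (M * t))
    (ε₁ ε₂ : ℝ) (hε₁ : 0 < ε₁) (hε₁₂ : ε₁ ≤ ε₂ ^ 2) (hε₂1 : ε₂ ^ 2 ≤ 1)
    (C : ℝ) (hC : 0 < C)
    (E : EuclideanSpace ℝ (Fin 2) → ℝ) (hE_smooth : ContDiff ℝ 2 E)
    (hE0 : ∀ x ∈ Ω, |E x| ≤ C * Real.exp (-(infDist x (frontier Ω)) / ε₂))
    (hE1 : ∀ x ∈ Ω, ‖gradient E x‖ ≤ C * ε₂⁻¹ * Real.exp (-(infDist x (frontier Ω)) / ε₂))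
    (hE2 : ∀ x ∈ Ω, |lap E x| ≤ C * ε₂⁻¹ ^ 2 * Real.exp (-(infDist x (frontier Ω)) / ε₂)) :
    (ε₂ / ε₁) * (∫ x in Ω, (ε₁ * lap E x) ^ 2) + ε₂ * (∫ x in Ω, ‖gradient E x‖ ^ 2)
      + (∫ x in Ω, E x ^ 2)
      ≤ 2 * C ^ 2 * M := by
  refine (balanced_norm_slow_layer_general Ω hΩ_open M hM hstrip ε₁ ε₂ hε₁ hε₁₂ hε₂1 C hC E
    hE_smooth.contDiffOn hE0 hE1 hE2).trans ?_
  gcongr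
  norm_num
end
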